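/- Let M be a d×d real symmetric positive semidefinite matrix, let c ≥ 0, and let U ∈ ℝ^{d×n} be any matrix (for any number of columns n) satisfying U·Uᵀ = M. Then log det(I + c·M) ≤ Σ_{i=1}^{n} log(1 + c·‖U_i‖₂²). -/

import Mathlib

/-!
By Sylvester's determinant identity, `P = 1 + c U Uᴴ` and `N = 1 + c Uᴴ U` have the same
determinant. The diagonal entries of `N` are `1 + c ‖U_i‖²`, so the theorem is the logarithm of
Hadamard's inequality for `N`: the determinant of a positive semidefinite matrix is at most the
product of its diagonal entries. Rescaling to unit diagonal reduces Hadamard's inequality to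
`∏ λᵢ ≤ ∏ exp (λᵢ - 1) = exp (∑ λᵢ - n) = 1` for the eigenvalues `λᵢ`, whose sum is the trace `n`.

`N` is positive definite whenever `P` is: this is clear for `c ≥ 0`, and for `c ≤ 0` the identity
`N = N² - c Uᴴ P U` shows that `N` is positive semidefinite, while `det N = det P ≠ 0`.
-/

open Matrix BigOperators

section Hadamard

open scoped ComplexOrder

variable {n 𝕜 : Type*} [Fintype n] [DecidableEq n] [RCLike 𝕜] {A : Matrix n n 𝕜}

lemma det_le_exp_trace_sub_card_of_posSemidef (hA : A.PosSemidef) :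
    A.det ≤ (Real.exp (RCLike.re A.trace - Fintype.card n) : 𝕜) := by
  have htrace : RCLike.re A.trace = ∑ i, hA.1.eigenvalues i := by
    rw [hA.1.trace_eq_sum_eigenvalues, ← RCLike.ofReal_sum, RCLike.ofReal_re]
  rw [hA.1.det_eq_prod_eigenvalues, ← RCLike.ofReal_prod, RCLike.ofReal_le_ofReal, htrace]
  calc ∏ i, hA.1.eigenvalues i
      ≤ ∏ i, Real.exp (hA.1.eigenvalues i - 1) :=
        Finset.prod_le_prod (fun i _ ↦ hA.eigenvalues_nonneg i) fun i _ ↦ by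
          simpa using Real.add_one_le_exp (hA.1.eigenvalues i - 1)
    _ = Real.exp (∑ i, hA.1.eigenvalues i - Fintype.card n) := by
        simp [← Real.exp_sum, Finset.sum_sub_distrib]

lemma det_le_one_of_posSemidef_of_diag_eq_one (hA : A.PosSemidef) (hdiag : ∀ i, A i i = 1) :
    A.det ≤ 1 := by
  have htrace : A.trace = Fintype.card n := by simp [Matrix.trace, hdiag]
  simpa only [htrace, RCLike.natCast_re, sub_self, Real.exp_zero, RCLike.ofReal_one] using
    det_le_exp_trace_sub_card_of_posSemidef hA

lemma det_le_prod_diag_of_posDef (hA : A.PosDef) : A.det ≤ ∏ i, A i i := by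
  let r : n → ℝ := fun i ↦ √(RCLike.re (A i i))
  have hr (i : n) : (r i : 𝕜) ≠ 0 :=
    RCLike.ofReal_ne_zero.mpr (Real.sqrt_pos.mpr (RCLike.pos_iff.mp hA.diag_pos).1).ne'
  have hr_sq (i : n) : (r i : 𝕜) * r i = A i i := by
    obtain ⟨hre, him⟩ := RCLike.pos_iff.mp (hA.diag_pos (i := i))
    rw [← RCLike.ofReal_mul, Real.mul_self_sqrt hre.le]
    exact RCLike.ext (by simp) (by simp [him])
  let D : Matrix n n 𝕜 := diagonal fun i ↦ (r i : 𝕜)⁻¹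
  have hD : Dᴴ = D := by
    simp [D, diagonal_conjTranspose, Pi.star_def]
  have hB : (D * A * D).PosSemidef := by
    simpa only [hD] using hA.posSemidef.conjTranspose_mul_mul_same D
  have hB_diag (i : n) : (D * A * D) i i = 1 := by
    rw [mul_diagonal, diagonal_mul, ← hr_sq i]
    field_simp [hr i]
  have hB_det : A.det = (∏ i, A i i) * (D * A * D).det := by
    have hprod : ∏ i, (r i : 𝕜) ≠ 0 := Finset.prod_ne_zero_iff.mpr fun i _ ↦ hr i
    simp only [← hr_sq, Finset.prod_mul_distrib, det_mul, D, det_diagonal, Finset.prod_inv_distrib]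
    field_simp
  rw [hB_det]
  exact mul_le_of_le_one_right (Finset.prod_nonneg fun i _ ↦ hA.diag_pos.le)
    (det_le_one_of_posSemidef_of_diag_eq_one hB hB_diag)

theorem det_le_prod_diag_of_posSemidef (hA : A.PosSemidef) : A.det ≤ ∏ i, A i i := by
  by_cases hdet : A.det = 0
  · rw [hdet]
    exact Finset.prod_nonneg fun i _ ↦ hA.diag_nonneg
  · exact det_le_prod_diag_of_posDef (hA.posDef_iff_det_ne_zero.mpr hdet)

end Hadamard

lemma det_one_add_smul_mul_comm {m n R S : Type*} [Fintype m] [Fintype n] [DecidableEq m]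
    [DecidableEq n] [CommRing R] [Monoid S] [DistribMulAction S R]
    [IsScalarTower S R R] [SMulCommClass S R R] (c : S) (U : Matrix m n R) (V : Matrix n m R) :
    (1 + c • (U * V)).det = (1 + c • (V * U)).det := by
  rw [← Matrix.smul_mul, det_one_add_mul_comm, Matrix.mul_smul]

section Gram

open scoped ComplexOrder

variable {m n 𝕜 : Type*} [Fintype m] [RCLike 𝕜]

lemma one_add_smul_conjTranspose_mul_self_apply_diag [DecidableEq n] (c : ℝ)
    (U : Matrix m n 𝕜) (i : n) :
    (1 + c • (Uᴴ * U) : Matrix n n 𝕜) i i = ((1 + c * ∑ j, ‖U j i‖ ^ 2 : ℝ) : 𝕜) := by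
  simp [mul_apply, RCLike.conj_mul, RCLike.real_smul_eq_coe_mul]

lemma posDef_one_add_smul_conjTranspose_mul_self [Fintype n] [DecidableEq m] [DecidableEq n]
    {c : ℝ} {U : Matrix m n 𝕜} (h : (1 + c • (U * Uᴴ)).PosDef) :
    (1 + c • (Uᴴ * U)).PosDef := by
  rcases le_total 0 c with hc | hc
  · exact PosDef.one.add_posSemidef ((posSemidef_conjTranspose_mul_self U).smul hc)
  set N := 1 + c • (Uᴴ * U) with hN
  have hN_herm : Nᴴ = N := by simp [hN]
  have hdecomp : N = Nᴴ * N + (-c) • (Uᴴ * (1 + c • (U * Uᴴ)) * U) := by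
    rw [hN_herm, hN]
    simp only [Matrix.mul_add, Matrix.add_mul, Matrix.mul_one, Matrix.one_mul, Matrix.mul_smul,
      Matrix.smul_mul, Matrix.mul_assoc]
    module
  have hN_psd : N.PosSemidef := by
    rw [hdecomp]
    exact (posSemidef_conjTranspose_mul_self N).add
      ((h.posSemidef.conjTranspose_mul_mul_same U).smul (neg_nonneg.mpr hc))
  rw [hN_psd.posDef_iff_det_ne_zero, hN, ← det_one_add_smul_mul_comm]
  exact h.det_pos.ne'

theorem logdet_le_variational_general [Fintype n] [DecidableEq m]
    {c : ℝ} {U : Matrix m n 𝕜} (h : (1 + c • (U * Uᴴ)).PosDef) :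
    Real.log (RCLike.re (1 + c • (U * Uᴴ)).det) ≤
      ∑ i, Real.log (1 + c * ∑ j, ‖U j i‖ ^ 2) := by
  classical
  have hgram := posDef_one_add_smul_conjTranspose_mul_self h
  have hdiag_pos (i : n) : 0 < 1 + c * ∑ j, ‖U j i‖ ^ 2 := by
    rw [← RCLike.ofReal_pos (K := 𝕜), ← one_add_smul_conjTranspose_mul_self_apply_diag]
    exact hgram.diag_pos
  have hdet : (1 + c • (U * Uᴴ)).det ≤ ((∏ i, (1 + c * ∑ j, ‖U j i‖ ^ 2) : ℝ) : 𝕜) := by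
    rw [det_one_add_smul_mul_comm, RCLike.ofReal_prod]
    simpa only [one_add_smul_conjTranspose_mul_self_apply_diag]
      using det_le_prod_diag_of_posSemidef hgram.posSemidef
  rw [← Real.log_prod fun i _ ↦ (hdiag_pos i).ne']
  refine Real.log_le_log (RCLike.pos_iff.mp h.det_pos).1 ?_
  simpa only [RCLike.ofReal_re] using (RCLike.le_iff_re_im.mp hdet).1

end Gram

/-- For `M` PSD, `c ≥ 0`, and any `U ∈ ℝ^{d×n}` with `U * Uᵀ = M`,
`log det (I + c • M) ≤ ∑ i, log (1 + c * ‖U_i‖₂²)`, where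
`‖U_i‖₂² = ∑ j, (U j i)^2` is the squared Euclidean norm of the `i`-th column of `U`. -/
theorem logdet_le_variational (d n : ℕ) (M : Matrix (Fin d) (Fin d) ℝ)
    (hM : M.PosSemidef) (c : ℝ) (hc : 0 ≤ c)
    (U : Matrix (Fin d) (Fin n) ℝ) (hU : U * Uᵀ = M) :
    Real.log ((1 + c • M).det) ≤ ∑ i, Real.log (1 + c * ∑ j, (U j i) ^ 2) := by
  obtain rfl : U * Uᴴ = M := by rwa [conjTranspose_eq_transpose_of_trivial]
  simpa using logdet_le_variational_general (PosDef.one.add_posSemidef (hM.smul hc))
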